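/- With u = (1/3)a² − b, there exist nonzero rational numbers C, C₁, C₂ such that, in U(𝔤), modulo the left ideal U(𝔤)𝔫₊: (E₂₁²F₂₁⁴)_L(u) ≡ C·H₂₁(H₂₁+2); (E₁₀²F₃₁²)_L(u) ≡ C₁·H₁₀(H₁₀−1); (E₁₁²F₃₂²)_L(u) ≡ C₂·((1/3)H₁₁(H₁₁−1) + 3H₀₁). -/

import Mathlib

/-- The canonical embedding of a Lie algebra into its universal enveloping algebra. -/
noncomputable def ιU {L : Type*} [LieRing L] [LieAlgebra ℂ L] (x : L) :
    UniversalEnvelopingAlgebra ℂ L :=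
  UniversalEnvelopingAlgebra.ι ℂ x

/-- The adjoint action `X_L : f ↦ Xf − fX` of `X ∈ L` on `U(L)`. -/
noncomputable def adU {L : Type*} [LieRing L] [LieAlgebra ℂ L] (x : L)
    (f : UniversalEnvelopingAlgebra ℂ L) : UniversalEnvelopingAlgebra ℂ L :=
  ιU x * f - f * ιU x

/-- A Lie algebra over `ℂ` equipped with Chevalley generators of type `G₂`:
`E₁₀, F₁₀, H₁₀` correspond to the short simple root `α` and `E₀₁, F₀₁, H₀₁` to the long
simple root `β`, subject to the Chevalley relations and the Serre relations, and the
generators generate the Lie algebra.  (By Serre's theorem such a Lie algebra is a quotient of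
the simple Lie algebra of type `G₂`.) -/
structure G2Gens (L : Type*) [LieRing L] [LieAlgebra ℂ L] where
  E10 : L
  E01 : L
  F10 : L
  F01 : L
  H10 : L
  H01 : L
  hH10H01 : ⁅H10, H01⁆ = 0
  hE10F10 : ⁅E10, F10⁆ = H10
  hE01F01 : ⁅E01, F01⁆ = H01
  hE10F01 : ⁅E10, F01⁆ = 0
  hE01F10 : ⁅E01, F10⁆ = 0
  hH10E10 : ⁅H10, E10⁆ = (2 : ℂ) • E10
  hH01E01 : ⁅H01, E01⁆ = (2 : ℂ) • E01
  hH10E01 : ⁅H10, E01⁆ = (-3 : ℂ) • E01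
  hH01E10 : ⁅H01, E10⁆ = (-1 : ℂ) • E10
  hH10F10 : ⁅H10, F10⁆ = (-2 : ℂ) • F10
  hH01F01 : ⁅H01, F01⁆ = (-2 : ℂ) • F01
  hH10F01 : ⁅H10, F01⁆ = (3 : ℂ) • F01
  hH01F10 : ⁅H01, F10⁆ = (1 : ℂ) • F10
  serreE1 : ⁅E10, ⁅E10, ⁅E10, ⁅E10, E01⁆⁆⁆⁆ = 0
  serreE2 : ⁅E01, ⁅E01, E10⁆⁆ = 0
  serreF1 : ⁅F10, ⁅F10, ⁅F10, ⁅F10, F01⁆⁆⁆⁆ = 0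
  serreF2 : ⁅F01, ⁅F01, F10⁆⁆ = 0
  generates : LieSubalgebra.lieSpan ℂ L {E10, E01, F10, F01, H10, H01} = ⊤

namespace G2Gens

variable {L : Type*} [LieRing L] [LieAlgebra ℂ L] (g : G2Gens L)

/-- The root vector `E₁₁ = [E₁₀, E₀₁]`. -/
def E11 : L := ⁅g.E10, g.E01⁆
/-- The root vector `E₂₁ = (1/2)[E₁₁, E₁₀]`. -/
noncomputable def E21 : L := (2 : ℂ)⁻¹ • ⁅g.E11, g.E10⁆
/-- The root vector `E₃₁ = (1/3)[E₂₁, E₁₀]`. -/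
noncomputable def E31 : L := (3 : ℂ)⁻¹ • ⁅g.E21, g.E10⁆
/-- The root vector `E₃₂ = [E₃₁, E₀₁]`. -/
noncomputable def E32 : L := ⁅g.E31, g.E01⁆
/-- The root vector `F₁₁ = [F₀₁, F₁₀]`. -/
def F11 : L := ⁅g.F01, g.F10⁆
/-- The root vector `F₂₁ = (1/2)[F₁₀, F₁₁]`. -/
noncomputable def F21 : L := (2 : ℂ)⁻¹ • ⁅g.F10, g.F11⁆
/-- The root vector `F₃₁ = (1/3)[F₁₀, F₂₁]`. -/
noncomputable def F31 : L := (3 : ℂ)⁻¹ • ⁅g.F10, g.F21⁆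
/-- The root vector `F₃₂ = [F₀₁, F₃₁]`. -/
noncomputable def F32 : L := ⁅g.F01, g.F31⁆
/-- The coroot `H₁₁ = H₁₀ + 3H₀₁`. -/
def H11 : L := g.H10 + (3 : ℂ) • g.H01
/-- The coroot `H₂₁ = 2H₁₀ + 3H₀₁`. -/
def H21 : L := (2 : ℂ) • g.H10 + (3 : ℂ) • g.H01
/-- The coroot `H₃₁ = H₁₀ + H₀₁`. -/
def H31 : L := g.H10 + g.H01
/-- The coroot `H₃₂ = H₁₀ + 2H₀₁`. -/
def H32 : L := g.H10 + (2 : ℂ) • g.H01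

/-- The element `a = E₂₁` of `U(𝔤)`. -/
noncomputable def aU : UniversalEnvelopingAlgebra ℂ L := ιU g.E21
/-- The element `b = E₃₁E₁₁ − E₃₂E₁₀` of `U(𝔤)`. -/
noncomputable def bU : UniversalEnvelopingAlgebra ℂ L :=
  ιU g.E31 * ιU g.E11 - ιU g.E32 * ιU g.E10
/-- The element `c = E₃₁²E₀₁ − E₃₂E₃₁H₀₁ − E₃₂²F₀₁` of `U(𝔤)`. -/
noncomputable def cU : UniversalEnvelopingAlgebra ℂ L :=
  ιU g.E31 * ιU g.E31 * ιU g.E01 - ιU g.E32 * ιU g.E31 * ιU g.H01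
    - ιU g.E32 * ιU g.E32 * ιU g.F01
/-- The element `u = (1/3)a² − b` of `U(𝔤)`. -/
noncomputable def uU : UniversalEnvelopingAlgebra ℂ L :=
  (3 : ℂ)⁻¹ • (g.aU * g.aU) - g.bU
/-- The element `v = (2/9)a³ − ab − 3c` of `U(𝔤)`. -/
noncomputable def vU : UniversalEnvelopingAlgebra ℂ L :=
  ((2 : ℂ) / 9) • (g.aU * g.aU * g.aU) - g.aU * g.bU - (3 : ℂ) • g.cU

/-- `f ≡ h (mod U(𝔤)𝔫₊)`:  `f − h` lies in the left ideal of `U(𝔤)` generated by `E₁₀`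
and `E₀₁`. -/
def EqModN (f h : UniversalEnvelopingAlgebra ℂ L) : Prop :=
  ∃ A B : UniversalEnvelopingAlgebra ℂ L, f - h = A * ιU g.E10 + B * ιU g.E01

end G2Gens

set_option linter.unusedSimpArgs false

section LieHelpers

variable {L : Type*} [LieRing L] [LieAlgebra ℂ L]

/-- The bracket with an iterated bracket on the right, by the Jacobi identity. -/
lemma brR {x a s y p q : L} {c : ℂ} (hy : y = c • ⁅a, s⁆) (hp : ⁅x, a⁆ = p) (hq : ⁅x, s⁆ = q) :
    ⁅x, y⁆ = c • (⁅p, s⁆ + ⁅a, q⁆) := by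
  rw [hy, lie_smul, leibniz_lie, hp, hq]

/-- The bracket with an iterated bracket on the left, by the Jacobi identity. -/
lemma brL {x a s y p q : L} {c : ℂ} (hx : x = c • ⁅a, s⁆) (hp : ⁅a, y⁆ = p) (hq : ⁅s, y⁆ = q) :
    ⁅x, y⁆ = c • (⁅a, q⁆ - ⁅s, p⁆) := by
  rw [hx, smul_lie, lie_lie, hp, hq]

lemma ιU_add (x y : L) : ιU (x + y) = ιU x + ιU y := map_add _ x y

lemma ιU_smul (c : ℂ) (x : L) : ιU (c • x) = c • ιU x := map_smul _ c x

lemma ιU_zero : ιU (0 : L) = 0 := map_zero (UniversalEnvelopingAlgebra.ι ℂ)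

lemma ιU_lie (x y : L) : ιU ⁅x, y⁆ = ιU x * ιU y - ιU y * ιU x := by
  simp only [ιU, LieHom.map_lie, LieRing.of_associative_ring_bracket]

lemma adU_add (x : L) (f h : UniversalEnvelopingAlgebra ℂ L) :
    adU x (f + h) = adU x f + adU x h := by
  simp only [adU, mul_add, add_mul]; abel

lemma adU_smul (x : L) (c : ℂ) (f : UniversalEnvelopingAlgebra ℂ L) :
    adU x (c • f) = c • adU x f := by
  simp only [adU, mul_smul_comm, smul_mul_assoc, smul_sub]

lemma adU_mul (x y z : L) :
    adU x (ιU y * ιU z) = ιU ⁅x, y⁆ * ιU z + ιU y * ιU ⁅x, z⁆ := by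
  simp only [adU, ιU_lie]; noncomm_ring

/-- Reordering a product of two elements of the Lie algebra. -/
lemma swap {x y z : L} (h : ⁅x, y⁆ = z) : ιU x * ιU y = ιU y * ιU x + ιU z := by
  rw [← h, ιU_lie]; abel

/-- The bracket in the opposite order. -/
lemma brS {x y z w : L} (h : ⁅x, y⁆ = z) (hw : -z = w) : ⁅y, x⁆ = w := by
  rw [← lie_skew, h, hw]

variable (L) in
/-- Bilinearity of the bracket, as one collection of rewrite rules. -/
lemma lieRules : (∀ (c : ℂ) (x y : L), ⁅x, c • y⁆ = c • ⁅x, y⁆) ∧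
    (∀ (c : ℂ) (x y : L), ⁅c • x, y⁆ = c • ⁅x, y⁆) ∧
    (∀ x y z : L, ⁅x, y + z⁆ = ⁅x, y⁆ + ⁅x, z⁆) ∧
    (∀ x y z : L, ⁅x + y, z⁆ = ⁅x, z⁆ + ⁅y, z⁆) ∧
    (∀ x : L, ⁅x, (0 : L)⁆ = 0) ∧ (∀ x : L, ⁅(0 : L), x⁆ = 0) ∧ (∀ x : L, ⁅x, x⁆ = 0) :=
  ⟨fun c x y => lie_smul c x y, fun c x y => smul_lie c x y, lie_add, add_lie, lie_zero,
    zero_lie, lie_self⟩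

variable (L) in
/-- Linearity of the embedding and bilinearity of the product, as rewrite rules. -/
lemma ιURules : (∀ x y : L, ιU (x + y) = ιU x + ιU y) ∧
    (∀ (c : ℂ) (x : L), ιU (c • x) = c • ιU x) ∧ (ιU (0 : L) = 0) ∧
    (∀ f : UniversalEnvelopingAlgebra ℂ L, f * 0 = 0) ∧
    (∀ f : UniversalEnvelopingAlgebra ℂ L, 0 * f = 0) ∧
    (∀ f h k : UniversalEnvelopingAlgebra ℂ L, f * (h + k) = f * h + f * k) ∧
    (∀ f h k : UniversalEnvelopingAlgebra ℂ L, (f + h) * k = f * k + h * k) ∧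
    (∀ (c : ℂ) (f h : UniversalEnvelopingAlgebra ℂ L), (c • f) * h = c • (f * h)) ∧
    (∀ (c : ℂ) (f h : UniversalEnvelopingAlgebra ℂ L), f * (c • h) = c • (f * h)) :=
  ⟨ιU_add, ιU_smul, ιU_zero, mul_zero, zero_mul, mul_add, add_mul,
    fun c f h => smul_mul_assoc c f h, fun c f h => mul_smul_comm c f h⟩

variable (L) in
/-- The action of `adU x` on linear combinations of products of two elements. -/
lemma adURules :
    (∀ (x : L) (f h : UniversalEnvelopingAlgebra ℂ L), adU x (f + h) = adU x f + adU x h) ∧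
    (∀ (x : L) (c : ℂ) (f : UniversalEnvelopingAlgebra ℂ L), adU x (c • f) = c • adU x f) ∧
    (∀ x y z : L, adU x (ιU y * ιU z) = ιU ⁅x, y⁆ * ιU z + ιU y * ιU ⁅x, z⁆) :=
  ⟨adU_add, adU_smul, adU_mul⟩

lemma mul_twoU (f : UniversalEnvelopingAlgebra ℂ L) : f * 2 = (2 : ℂ) • f := by
  rw [mul_two, two_smul]

end LieHelpers

namespace G2Gens

variable {L : Type*} [LieRing L] [LieAlgebra ℂ L] (g : G2Gens L)

lemma defE11 : g.E11 = (1:ℂ) • ⁅g.E10, g.E01⁆ := (one_smul _ _).symm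
lemma defE21 : g.E21 = (2:ℂ)⁻¹ • ⁅g.E11, g.E10⁆ := rfl
lemma defE31 : g.E31 = (3:ℂ)⁻¹ • ⁅g.E21, g.E10⁆ := rfl
lemma defE32 : g.E32 = (1:ℂ) • ⁅g.E31, g.E01⁆ := (one_smul _ _).symm
lemma defF11 : g.F11 = (1:ℂ) • ⁅g.F01, g.F10⁆ := (one_smul _ _).symm
lemma defF21 : g.F21 = (2:ℂ)⁻¹ • ⁅g.F10, g.F11⁆ := rfl
lemma defF31 : g.F31 = (3:ℂ)⁻¹ • ⁅g.F10, g.F21⁆ := rfl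
lemma defF32 : g.F32 = (1:ℂ) • ⁅g.F01, g.F31⁆ := (one_smul _ _).symm

lemma br_H01_F10 : ⁅g.H01, g.F10⁆ = g.F10 := by rw [g.hH01F10, one_smul]

lemma br_H01_F01 : ⁅g.H01, g.F01⁆ = (-2:ℂ) • g.F01 := g.hH01F01

lemma br_F01_F10 : ⁅g.F01, g.F10⁆ = g.F11 := rfl

lemma br_H01_F11 : ⁅g.H01, g.F11⁆ = (-1:ℂ) • g.F11 := by
  rw [brR g.defF11 g.br_H01_F01 g.br_H01_F10]
  simp only [lieRules L, g.br_F01_F10]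
  module

lemma br_F10_F11 : ⁅g.F10, g.F11⁆ = (2:ℂ) • g.F21 := by rw [defF21]; module

lemma br_H01_F21 : ⁅g.H01, g.F21⁆ = 0 := by
  rw [brR g.defF21 g.br_H01_F10 g.br_H01_F11]
  simp only [lieRules L, g.br_F10_F11]
  module

lemma br_F10_F21 : ⁅g.F10, g.F21⁆ = (3:ℂ) • g.F31 := by rw [defF31]; module

lemma br_H01_F31 : ⁅g.H01, g.F31⁆ = g.F31 := by
  rw [brR g.defF31 g.br_H01_F10 g.br_H01_F21]
  simp only [lieRules L, g.br_F10_F21]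
  module

lemma br_F31_H01 : ⁅g.F31, g.H01⁆ = (-1:ℂ) • g.F31 := brS g.br_H01_F31 (by module)

lemma br_E10_F10 : ⁅g.E10, g.F10⁆ = g.H10 := g.hE10F10

lemma br_E10_F01 : ⁅g.E10, g.F01⁆ = 0 := g.hE10F01

lemma br_H10_F01 : ⁅g.H10, g.F01⁆ = (3:ℂ) • g.F01 := g.hH10F01

lemma br_F01_H10 : ⁅g.F01, g.H10⁆ = (-3:ℂ) • g.F01 := brS g.br_H10_F01 (by module)

lemma br_E10_F11 : ⁅g.E10, g.F11⁆ = (-3:ℂ) • g.F01 := by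
  rw [brR g.defF11 g.br_E10_F01 g.br_E10_F10]
  simp only [lieRules L, g.br_F01_H10]
  module

lemma br_H10_F10 : ⁅g.H10, g.F10⁆ = (-2:ℂ) • g.F10 := g.hH10F10

lemma br_H10_F11 : ⁅g.H10, g.F11⁆ = g.F11 := by
  rw [brR g.defF11 g.br_H10_F01 g.br_H10_F10]
  simp only [lieRules L, g.br_F01_F10]
  module

lemma br_F10_F01 : ⁅g.F10, g.F01⁆ = (-1:ℂ) • g.F11 := brS g.br_F01_F10 (by module)

lemma br_E10_F21 : ⁅g.E10, g.F21⁆ = (2:ℂ) • g.F11 := by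
  rw [brR g.defF21 g.br_E10_F10 g.br_E10_F11]
  simp only [lieRules L, g.br_H10_F11, g.br_F10_F01]
  module

lemma br_E01_F10 : ⁅g.E01, g.F10⁆ = 0 := g.hE01F10

lemma br_E01_F01 : ⁅g.E01, g.F01⁆ = g.H01 := g.hE01F01

lemma br_E01_F11 : ⁅g.E01, g.F11⁆ = g.F10 := by
  rw [brR g.defF11 g.br_E01_F01 g.br_E01_F10]
  simp only [lieRules L, g.br_H01_F10]
  module

lemma br_E01_F21 : ⁅g.E01, g.F21⁆ = 0 := by
  rw [brR g.defF21 g.br_E01_F10 g.br_E01_F11]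
  simp only [lieRules L]
  module

lemma br_E11_F21 : ⁅g.E11, g.F21⁆ = (-2:ℂ) • g.F10 := by
  rw [brL g.defE11 g.br_E10_F21 g.br_E01_F21]
  simp only [lieRules L, g.br_E01_F11]
  module

lemma br_E11_F11 : ⁅g.E11, g.F11⁆ = g.H10 + (3:ℂ) • g.H01 := by
  rw [brL g.defE11 g.br_E10_F11 g.br_E01_F11]
  simp only [lieRules L, g.br_E01_F01, g.br_E10_F10]
  module

lemma br_E21_F21 : ⁅g.E21, g.F21⁆ = (2:ℂ) • g.H10 + (3:ℂ) • g.H01 := by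
  rw [brL g.defE21 g.br_E11_F21 g.br_E10_F21]
  simp only [lieRules L, g.br_E10_F10, g.br_E11_F11]
  module

lemma br_H10_E10 : ⁅g.H10, g.E10⁆ = (2:ℂ) • g.E10 := g.hH10E10

lemma br_E10_H10 : ⁅g.E10, g.H10⁆ = (-2:ℂ) • g.E10 := brS g.br_H10_E10 (by module)

lemma br_H01_E10 : ⁅g.H01, g.E10⁆ = (-1:ℂ) • g.E10 := g.hH01E10

lemma br_E10_H01 : ⁅g.E10, g.H01⁆ = g.E10 := brS g.br_H01_E10 (by module)

lemma br_F01_E10 : ⁅g.F01, g.E10⁆ = 0 := brS g.br_E10_F01 (by module)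

lemma br_F01_E01 : ⁅g.F01, g.E01⁆ = (-1:ℂ) • g.H01 := brS g.br_E01_F01 (by module)

lemma br_F01_E11 : ⁅g.F01, g.E11⁆ = (-1:ℂ) • g.E10 := by
  rw [brR g.defE11 g.br_F01_E10 g.br_F01_E01]
  simp only [lieRules L, g.br_E10_H01]
  module

lemma br_E11_F01 : ⁅g.E11, g.F01⁆ = g.E10 := brS g.br_F01_E11 (by module)

lemma br_E21_F11 : ⁅g.E21, g.F11⁆ = (-2:ℂ) • g.E10 := by
  rw [brL g.defE21 g.br_E11_F11 g.br_E10_F11]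
  simp only [lieRules L, g.br_E10_H10, g.br_E10_H01, g.br_E11_F01]
  module

lemma br_E31_F21 : ⁅g.E31, g.F21⁆ = (-1:ℂ) • g.E10 := by
  rw [brL g.defE31 g.br_E21_F21 g.br_E10_F21]
  simp only [lieRules L, g.br_E10_H10, g.br_E10_H01, g.br_E21_F11]
  module

lemma br_E10_E01 : ⁅g.E10, g.E01⁆ = g.E11 := rfl

lemma br_E01_E10 : ⁅g.E01, g.E10⁆ = (-1:ℂ) • g.E11 := brS g.br_E10_E01 (by module)

lemma br_E32_F21 : ⁅g.E32, g.F21⁆ = (-1:ℂ) • g.E11 := by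
  rw [brL g.defE32 g.br_E31_F21 g.br_E01_F21]
  simp only [lieRules L, g.br_E01_E10]
  module

lemma br_F21_E32 : ⁅g.F21, g.E32⁆ = g.E11 := brS g.br_E32_F21 (by module)

lemma br_H10_E01 : ⁅g.H10, g.E01⁆ = (-3:ℂ) • g.E01 := g.hH10E01

lemma br_H10_E11 : ⁅g.H10, g.E11⁆ = (-1:ℂ) • g.E11 := by
  rw [brR g.defE11 g.br_H10_E10 g.br_H10_E01]
  simp only [lieRules L, g.br_E10_E01]
  module

lemma br_E11_E10 : ⁅g.E11, g.E10⁆ = (2:ℂ) • g.E21 := by rw [defE21]; module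

lemma br_H10_E21 : ⁅g.H10, g.E21⁆ = g.E21 := by
  rw [brR g.defE21 g.br_H10_E11 g.br_H10_E10]
  simp only [lieRules L, g.br_E11_E10]
  module

lemma br_E21_H10 : ⁅g.E21, g.H10⁆ = (-1:ℂ) • g.E21 := brS g.br_H10_E21 (by module)

lemma br_F10_E10 : ⁅g.F10, g.E10⁆ = (-1:ℂ) • g.H10 := brS g.br_E10_F10 (by module)

lemma br_F10_E01 : ⁅g.F10, g.E01⁆ = 0 := brS g.br_E01_F10 (by module)

lemma br_F10_E11 : ⁅g.F10, g.E11⁆ = (3:ℂ) • g.E01 := by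
  rw [brR g.defE11 g.br_F10_E10 g.br_F10_E01]
  simp only [lieRules L, g.br_H10_E01]
  module

lemma br_E11_H10 : ⁅g.E11, g.H10⁆ = g.E11 := brS g.br_H10_E11 (by module)

lemma br_F10_E21 : ⁅g.F10, g.E21⁆ = (-2:ℂ) • g.E11 := by
  rw [brR g.defE21 g.br_F10_E11 g.br_F10_E10]
  simp only [lieRules L, g.br_E01_E10, g.br_E11_H10]
  module

lemma br_E21_F10 : ⁅g.E21, g.F10⁆ = (2:ℂ) • g.E11 := brS g.br_F10_E21 (by module)

lemma br_H10_F21 : ⁅g.H10, g.F21⁆ = (-1:ℂ) • g.F21 := by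
  rw [brR g.defF21 g.br_H10_F10 g.br_H10_F11]
  simp only [lieRules L, g.br_F10_F11]
  module

lemma br_E10_F31 : ⁅g.E10, g.F31⁆ = g.F21 := by
  rw [brR g.defF31 g.br_E10_F10 g.br_E10_F21]
  simp only [lieRules L, g.br_H10_F21, g.br_F10_F11]
  module

lemma br_F01_F11 : ⁅g.F01, g.F11⁆ = 0 := by
  rw [brR g.defF11 (lie_self g.F01) rfl, zero_lie, zero_add, one_smul, g.serreF2]

lemma br_F01_F21 : ⁅g.F01, g.F21⁆ = 0 := by
  rw [brR g.defF21 g.br_F01_F10 g.br_F01_F11]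
  simp only [lieRules L]
  module

lemma br_E10_F32 : ⁅g.E10, g.F32⁆ = 0 := by
  rw [brR g.defF32 g.br_E10_F01 g.br_E10_F31]
  simp only [lieRules L, g.br_F01_F21]
  module

lemma br_E01_F31 : ⁅g.E01, g.F31⁆ = 0 := by
  rw [brR g.defF31 g.br_E01_F10 g.br_E01_F21]
  simp only [lieRules L]
  module

lemma br_E01_F32 : ⁅g.E01, g.F32⁆ = g.F31 := by
  rw [brR g.defF32 g.br_E01_F01 g.br_E01_F31]
  simp only [lieRules L, g.br_H01_F31]
  module

lemma br_E11_F32 : ⁅g.E11, g.F32⁆ = g.F21 := by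
  rw [brL g.defE11 g.br_E10_F32 g.br_E01_F32]
  simp only [lieRules L, g.br_E10_F31]
  module

lemma br_E21_F32 : ⁅g.E21, g.F32⁆ = (-1:ℂ) • g.F11 := by
  rw [brL g.defE21 g.br_E11_F32 g.br_E10_F32]
  simp only [lieRules L, g.br_E10_F21]
  module

lemma br_F32_E21 : ⁅g.F32, g.E21⁆ = g.F11 := brS g.br_E21_F32 (by module)

lemma br_E11_F31 : ⁅g.E11, g.F31⁆ = 0 := by
  rw [brL g.defE11 g.br_E10_F31 g.br_E01_F31]
  simp only [lieRules L, g.br_E01_F21]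
  module

lemma br_E21_F31 : ⁅g.E21, g.F31⁆ = (-1:ℂ) • g.F10 := by
  rw [brL g.defE21 g.br_E11_F31 g.br_E10_F31]
  simp only [lieRules L, g.br_E11_F21]
  module

lemma br_E31_F31 : ⁅g.E31, g.F31⁆ = g.H10 + g.H01 := by
  rw [brL g.defE31 g.br_E21_F31 g.br_E10_F31]
  simp only [lieRules L, g.br_E10_F10, g.br_E21_F21]
  module

lemma br_F31_E31 : ⁅g.F31, g.E31⁆ = (-1:ℂ) • g.H10 + (-1:ℂ) • g.H01 := brS g.br_E31_F31 (by module)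

lemma br_E21_E10 : ⁅g.E21, g.E10⁆ = (3:ℂ) • g.E31 := by rw [defE31]; module

lemma br_F32_E11 : ⁅g.F32, g.E11⁆ = (-1:ℂ) • g.F21 := brS g.br_E11_F32 (by module)

lemma br_F21_H10 : ⁅g.F21, g.H10⁆ = g.F21 := brS g.br_H10_F21 (by module)

lemma br_F21_F10 : ⁅g.F21, g.F10⁆ = (-3:ℂ) • g.F31 := brS g.br_F10_F21 (by module)

lemma br_E01_H10 : ⁅g.E01, g.H10⁆ = (3:ℂ) • g.E01 := brS g.br_H10_E01 (by module)

lemma br_H01_E01 : ⁅g.H01, g.E01⁆ = (2:ℂ) • g.E01 := g.hH01E01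

lemma br_E01_H01 : ⁅g.E01, g.H01⁆ = (-2:ℂ) • g.E01 := brS g.br_H01_E01 (by module)

lemma br_E32_F31 : ⁅g.E32, g.F31⁆ = (-1:ℂ) • g.E01 := by
  rw [brL g.defE32 g.br_E31_F31 g.br_E01_F31]
  simp only [lieRules L, g.br_E01_H10, g.br_E01_H01]
  module

lemma br_F31_E32 : ⁅g.F31, g.E32⁆ = g.E01 := brS g.br_E32_F31 (by module)

lemma br_E10_E21 : ⁅g.E10, g.E21⁆ = (-3:ℂ) • g.E31 := brS g.br_E21_E10 (by module)

lemma br_E01_E11 : ⁅g.E01, g.E11⁆ = 0 := by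
  have h := g.serreE2
  rw [← lie_skew g.E01 g.E10, lie_neg, neg_eq_zero] at h
  exact h

lemma br_E01_E21 : ⁅g.E01, g.E21⁆ = 0 := by
  rw [brR g.defE21 g.br_E01_E11 g.br_E01_E10]
  simp only [lieRules L]
  module

lemma br_E31_E01 : ⁅g.E31, g.E01⁆ = g.E32 := by rw [defE32]; module

lemma br_E01_E31 : ⁅g.E01, g.E31⁆ = (-1:ℂ) • g.E32 := brS g.br_E31_E01 (by module)

lemma br_E11_E21 : ⁅g.E11, g.E21⁆ = (-3:ℂ) • g.E32 := by
  rw [brL g.defE11 g.br_E10_E21 g.br_E01_E21]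
  simp only [lieRules L, g.br_E01_E31]
  module

lemma br_F21_E10 : ⁅g.F21, g.E10⁆ = (-2:ℂ) • g.F11 := brS g.br_E10_F21 (by module)

lemma br_F10_F31 : ⁅g.F10, g.F31⁆ = 0 := by
  have h := g.serreF1
  rw [← lie_skew g.F10 g.F01, g.br_F01_F10] at h
  simp only [lie_neg, lie_smul, g.br_F10_F11, g.br_F10_F21] at h
  linear_combination (norm := module) (-6 : ℂ)⁻¹ • h

lemma br_F01_F31 : ⁅g.F01, g.F31⁆ = g.F32 := by rw [defF32]; module

lemma br_F11_F21 : ⁅g.F11, g.F21⁆ = (3:ℂ) • g.F32 := by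
  rw [brL g.defF11 g.br_F01_F21 g.br_F10_F21]
  simp only [lieRules L, g.br_F01_F31]
  module

lemma br_F11_F31 : ⁅g.F11, g.F31⁆ = 0 := by
  have h1 := brR g.defF32 g.br_F10_F01 g.br_F10_F31
  have h2 : g.F32 = (3:ℂ)⁻¹ • ⁅g.F11, g.F21⁆ := by rw [g.br_F11_F21]; module
  rw [brR h2 g.br_F10_F11 g.br_F10_F21] at h1
  simp only [lieRules L] at h1
  linear_combination (norm := module) (2:ℂ)⁻¹ • h1

lemma br_F21_F31 : ⁅g.F21, g.F31⁆ = 0 := by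
  rw [brL g.defF21 g.br_F10_F31 g.br_F11_F31]
  simp only [lieRules L]
  module

lemma br_F31_F21 : ⁅g.F31, g.F21⁆ = 0 := brS g.br_F21_F31 (by module)

lemma br_F32_F21 : ⁅g.F32, g.F21⁆ = 0 := by
  rw [brL g.defF32 g.br_F01_F21 g.br_F31_F21]
  simp only [lieRules L]
  module

lemma br_F21_F11 : ⁅g.F21, g.F11⁆ = (-3:ℂ) • g.F32 := by
  rw [brL g.defF21 g.br_F10_F11 (lie_self g.F11)]
  simp only [lieRules L, g.br_F11_F21]
  module

lemma br_H01_F32 : ⁅g.H01, g.F32⁆ = (-1:ℂ) • g.F32 := by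
  rw [brR g.defF32 g.br_H01_F01 g.br_H01_F31]
  simp only [lieRules L, g.br_F01_F31]
  module

lemma br_F32_H01 : ⁅g.F32, g.H01⁆ = g.F32 := brS g.br_H01_F32 (by module)

lemma br_H10_F31 : ⁅g.H10, g.F31⁆ = (-3:ℂ) • g.F31 := by
  rw [brR g.defF31 g.br_H10_F10 g.br_H10_F21]
  simp only [lieRules L, g.br_F10_F21]
  module

lemma br_F31_H10 : ⁅g.F31, g.H10⁆ = (3:ℂ) • g.F31 := brS g.br_H10_F31 (by module)

lemma br_E10_E11 : ⁅g.E10, g.E11⁆ = (-2:ℂ) • g.E21 := brS g.br_E11_E10 (by module)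

lemma br_E21_E11 : ⁅g.E21, g.E11⁆ = (3:ℂ) • g.E32 := by
  rw [brL g.defE21 (lie_self g.E11) g.br_E10_E11]
  simp only [lieRules L, g.br_E11_E21]
  module

lemma br_E31_F32 : ⁅g.E31, g.F32⁆ = (-1:ℂ) • g.F01 := by
  rw [brL g.defE31 g.br_E21_F32 g.br_E10_F32]
  simp only [lieRules L, g.br_E10_F11]
  module

lemma br_F32_E31 : ⁅g.F32, g.E31⁆ = g.F01 := brS g.br_E31_F32 (by module)

lemma br_F01_F32 : ⁅g.F01, g.F32⁆ = 0 := by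
  rw [brR (y := g.F32) (c := (3:ℂ)⁻¹) (by rw [g.br_F11_F21]; module) g.br_F01_F11 g.br_F01_F21]
  simp only [lieRules L]
  module

lemma br_F32_F01 : ⁅g.F32, g.F01⁆ = 0 := brS g.br_F01_F32 (by module)

lemma br_F31_F10 : ⁅g.F31, g.F10⁆ = 0 := brS g.br_F10_F31 (by module)

lemma br_F21_E21 : ⁅g.F21, g.E21⁆ = (-2:ℂ) • g.H10 + (-3:ℂ) • g.H01 := brS g.br_E21_F21 (by module)

lemma br_H01_E11 : ⁅g.H01, g.E11⁆ = g.E11 := by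
  rw [brR g.defE11 g.br_H01_E10 g.br_H01_E01]
  simp only [lieRules L, g.br_E10_E01]
  module

lemma br_E11_H01 : ⁅g.E11, g.H01⁆ = (-1:ℂ) • g.E11 := brS g.br_H01_E11 (by module)

lemma br_F31_E10 : ⁅g.F31, g.E10⁆ = (-1:ℂ) • g.F21 := brS g.br_E10_F31 (by module)

lemma br_F21_E11 : ⁅g.F21, g.E11⁆ = (2:ℂ) • g.F10 := brS g.br_E11_F21 (by module)

lemma br_E32_F32 : ⁅g.E32, g.F32⁆ = g.H10 + (2:ℂ) • g.H01 := by
  rw [brL g.defE32 g.br_E31_F32 g.br_E01_F32]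
  simp only [lieRules L, g.br_E01_F01, g.br_E31_F31]
  module

lemma br_F32_E32 : ⁅g.F32, g.E32⁆ = (-1:ℂ) • g.H10 + (-2:ℂ) • g.H01 := brS g.br_E32_F32 (by module)

lemma br_H01_E21 : ⁅g.H01, g.E21⁆ = 0 := by
  rw [brR g.defE21 g.br_H01_E11 g.br_H01_E10]
  simp only [lieRules L, g.br_E11_E10]
  module

lemma br_E21_H01 : ⁅g.E21, g.H01⁆ = 0 := brS g.br_H01_E21 (by module)

lemma br_H10_F32 : ⁅g.H10, g.F32⁆ = 0 := by
  rw [brR g.defF32 g.br_H10_F01 g.br_H10_F31]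
  simp only [lieRules L, g.br_F01_F31]
  module

lemma br_F32_H10 : ⁅g.F32, g.H10⁆ = 0 := brS g.br_H10_F32 (by module)

lemma br_F31_E21 : ⁅g.F31, g.E21⁆ = g.F10 := brS g.br_E21_F31 (by module)

lemma br_F21_H01 : ⁅g.F21, g.H01⁆ = 0 := brS g.br_H01_F21 (by module)

lemma br_F31_E11 : ⁅g.F31, g.E11⁆ = 0 := brS g.br_E11_F31 (by module)

lemma br_F21_E31 : ⁅g.F21, g.E31⁆ = g.E10 := brS g.br_E31_F21 (by module)

lemma br_F10_F32 : ⁅g.F10, g.F32⁆ = 0 := by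
  rw [brR g.defF32 g.br_F10_F01 g.br_F10_F31]
  simp only [lieRules L, g.br_F11_F31]
  module

lemma br_F11_F32 : ⁅g.F11, g.F32⁆ = 0 := by
  rw [brL g.defF11 g.br_F01_F32 g.br_F10_F32]
  simp only [lieRules L]
  module

lemma br_F21_F32 : ⁅g.F21, g.F32⁆ = 0 := by
  rw [brL g.defF21 g.br_F10_F32 g.br_F11_F32]
  simp only [lieRules L]
  module

lemma br_F32_E10 : ⁅g.F32, g.E10⁆ = 0 := brS g.br_E10_F32 (by module)

lemma br_F31_F11 : ⁅g.F31, g.F11⁆ = 0 := brS g.br_F11_F31 (by module)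

lemma br_F32_F11 : ⁅g.F32, g.F11⁆ = 0 := by
  rw [brL g.defF32 g.br_F01_F11 g.br_F31_F11]
  simp only [lieRules L]
  module

lemma br_F31_E01 : ⁅g.F31, g.E01⁆ = 0 := brS g.br_E01_F31 (by module)

lemma br_E11_F10 : ⁅g.E11, g.F10⁆ = (-3:ℂ) • g.E01 := brS g.br_F10_E11 (by module)

lemma br_H10_H01 : ⁅g.H10, g.H01⁆ = 0 := g.hH10H01

lemma uU_eq : g.uU = (1/3:ℂ) • (ιU g.E21 * ιU g.E21) + (-1:ℂ) • (ιU g.E31 * ιU g.E11)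
    + (1:ℂ) • (ιU g.E32 * ιU g.E10) := by
  simp only [uU, aU, bU]; module

lemma step_1_1 : adU g.F21 ((1/3:ℂ) • (ιU g.E21 * ιU g.E21) + (-1:ℂ) • (ιU g.E31 * ιU g.E11) +
    (1:ℂ) • (ιU g.E32 * ιU g.E10)) =
    (-2/3:ℂ) • (ιU g.H10 * ιU g.E21) + (-1:ℂ) • (ιU g.H01 * ιU g.E21) + (-2/3:ℂ) • (ιU g.E21 * ιU
        g.H10) + (-1:ℂ) • (ιU g.E21 * ιU g.H01) + (-1:ℂ) • (ιU g.E10 * ιU g.E11) + (-2:ℂ) • (ιU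
        g.E31 * ιU g.F10) + (1:ℂ) • (ιU g.E11 * ιU g.E10) + (-2:ℂ) • (ιU g.E32 * ιU g.F11) := by
  simp only [adURules L, g.br_F21_E21, g.br_F21_E31, g.br_F21_E11, g.br_F21_E32, g.br_F21_E10,
      lie_self, ιURules L]
  module

lemma step_1_2 : adU g.F21 ((-2/3:ℂ) • (ιU g.H10 * ιU g.E21) + (-1:ℂ) • (ιU g.H01 * ιU g.E21) +
    (-2/3:ℂ) • (ιU g.E21 * ιU g.H10) + (-1:ℂ) • (ιU g.E21 * ιU g.H01) + (-1:ℂ) • (ιU g.E10 * ιU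
    g.E11) + (-2:ℂ) • (ιU g.E31 * ιU g.F10) + (1:ℂ) • (ιU g.E11 * ιU g.E10) + (-2:ℂ) • (ιU g.E32 *
    ιU g.F11)) =
    (-2/3:ℂ) • (ιU g.F21 * ιU g.E21) + (8/3:ℂ) • (ιU g.H10 * ιU g.H10) + (4:ℂ) • (ιU g.H10 * ιU
        g.H01) + (4:ℂ) • (ιU g.H01 * ιU g.H10) + (6:ℂ) • (ιU g.H01 * ιU g.H01) + (-2/3:ℂ) • (ιU
        g.E21 * ιU g.F21) + (2:ℂ) • (ιU g.F11 * ιU g.E11) + (-4:ℂ) • (ιU g.E10 * ιU g.F10) + (6:ℂ)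
        • (ιU g.E31 * ιU g.F31) + (2:ℂ) • (ιU g.F10 * ιU g.E10) + (-4:ℂ) • (ιU g.E11 * ιU g.F11) +
        (6:ℂ) • (ιU g.E32 * ιU g.F32) := by
  simp only [adURules L, g.br_F21_H10, g.br_F21_E21, g.br_F21_H01, g.br_F21_E10, g.br_F21_E11,
      g.br_F21_E31, g.br_F21_F10, g.br_F21_E32, g.br_F21_F11, lie_self, ιURules L]
  module

lemma step_1_3 : adU g.F21 ((-2/3:ℂ) • (ιU g.F21 * ιU g.E21) + (8/3:ℂ) • (ιU g.H10 * ιU g.H10) +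
    (4:ℂ) • (ιU g.H10 * ιU g.H01) + (4:ℂ) • (ιU g.H01 * ιU g.H10) + (6:ℂ) • (ιU g.H01 * ιU g.H01)
    + (-2/3:ℂ) • (ιU g.E21 * ιU g.F21) + (2:ℂ) • (ιU g.F11 * ιU g.E11) + (-4:ℂ) • (ιU g.E10 * ιU
    g.F10) + (6:ℂ) • (ιU g.E31 * ιU g.F31) + (2:ℂ) • (ιU g.F10 * ιU g.E10) + (-4:ℂ) • (ιU g.E11 *
    ιU g.F11) + (6:ℂ) • (ιU g.E32 * ιU g.F32)) =
    (4:ℂ) • (ιU g.F21 * ιU g.H10) + (6:ℂ) • (ιU g.F21 * ιU g.H01) + (4:ℂ) • (ιU g.H10 * ιU g.F21)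
        + (6:ℂ) • (ιU g.H01 * ιU g.F21) + (-6:ℂ) • (ιU g.F32 * ιU g.E11) + (12:ℂ) • (ιU g.F11 * ιU
        g.F10) + (18:ℂ) • (ιU g.E10 * ιU g.F31) + (-6:ℂ) • (ιU g.F31 * ιU g.E10) + (-12:ℂ) • (ιU
        g.F10 * ιU g.F11) + (18:ℂ) • (ιU g.E11 * ιU g.F32) := by
  simp only [adURules L, g.br_F21_E21, g.br_F21_H10, g.br_F21_H01, g.br_F21_F11, g.br_F21_E11,
      g.br_F21_E10, g.br_F21_F10, g.br_F21_E31, g.br_F21_F31, g.br_F21_E32, g.br_F21_F32,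
      lie_self, ιURules L]
  module

lemma step_1_4 : adU g.F21 ((4:ℂ) • (ιU g.F21 * ιU g.H10) + (6:ℂ) • (ιU g.F21 * ιU g.H01) + (4:ℂ)
    • (ιU g.H10 * ιU g.F21) + (6:ℂ) • (ιU g.H01 * ιU g.F21) + (-6:ℂ) • (ιU g.F32 * ιU g.E11) +
    (12:ℂ) • (ιU g.F11 * ιU g.F10) + (18:ℂ) • (ιU g.E10 * ιU g.F31) + (-6:ℂ) • (ιU g.F31 * ιU
    g.E10) + (-12:ℂ) • (ιU g.F10 * ιU g.F11) + (18:ℂ) • (ιU g.E11 * ιU g.F32)) =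
    (8:ℂ) • (ιU g.F21 * ιU g.F21) + (-48:ℂ) • (ιU g.F32 * ιU g.F10) + (-72:ℂ) • (ιU g.F11 * ιU
        g.F31) + (48:ℂ) • (ιU g.F31 * ιU g.F11) + (72:ℂ) • (ιU g.F10 * ιU g.F32) := by
  simp only [adURules L, g.br_F21_H10, g.br_F21_H01, g.br_F21_F32, g.br_F21_E11, g.br_F21_F11,
      g.br_F21_F10, g.br_F21_E10, g.br_F21_F31, lie_self, ιURules L]
  module

lemma step_1_5 : adU g.E21 ((8:ℂ) • (ιU g.F21 * ιU g.F21) + (-48:ℂ) • (ιU g.F32 * ιU g.F10) +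
    (-72:ℂ) • (ιU g.F11 * ιU g.F31) + (48:ℂ) • (ιU g.F31 * ιU g.F11) + (72:ℂ) • (ιU g.F10 * ιU
    g.F32)) =
    (16:ℂ) • (ιU g.H10 * ιU g.F21) + (24:ℂ) • (ιU g.H01 * ιU g.F21) + (16:ℂ) • (ιU g.F21 * ιU
        g.H10) + (24:ℂ) • (ιU g.F21 * ιU g.H01) + (120:ℂ) • (ιU g.F11 * ιU g.F10) + (-96:ℂ) • (ιU
        g.F32 * ιU g.E11) + (144:ℂ) • (ιU g.E10 * ιU g.F31) + (-120:ℂ) • (ιU g.F10 * ιU g.F11) +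
        (-96:ℂ) • (ιU g.F31 * ιU g.E10) + (144:ℂ) • (ιU g.E11 * ιU g.F32) := by
  simp only [adURules L, g.br_E21_F21, g.br_E21_F32, g.br_E21_F10, g.br_E21_F11, g.br_E21_F31,
      lie_self, ιURules L]
  module

lemma step_1_6 : adU g.E21 ((16:ℂ) • (ιU g.H10 * ιU g.F21) + (24:ℂ) • (ιU g.H01 * ιU g.F21) +
    (16:ℂ) • (ιU g.F21 * ιU g.H10) + (24:ℂ) • (ιU g.F21 * ιU g.H01) + (120:ℂ) • (ιU g.F11 * ιU
    g.F10) + (-96:ℂ) • (ιU g.F32 * ιU g.E11) + (144:ℂ) • (ιU g.E10 * ιU g.F31) + (-120:ℂ) • (ιU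
    g.F10 * ιU g.F11) + (-96:ℂ) • (ιU g.F31 * ιU g.E10) + (144:ℂ) • (ιU g.E11 * ιU g.F32)) =
    (-16:ℂ) • (ιU g.E21 * ιU g.F21) + (64:ℂ) • (ιU g.H10 * ιU g.H10) + (96:ℂ) • (ιU g.H10 * ιU
        g.H01) + (96:ℂ) • (ιU g.H01 * ιU g.H10) + (144:ℂ) • (ιU g.H01 * ιU g.H01) + (-16:ℂ) • (ιU
        g.F21 * ιU g.E21) + (-384:ℂ) • (ιU g.E10 * ιU g.F10) + (336:ℂ) • (ιU g.F11 * ιU g.E11) +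
        (-288:ℂ) • (ιU g.F32 * ιU g.E32) + (432:ℂ) • (ιU g.E31 * ιU g.F31) + (-384:ℂ) • (ιU g.E11
        * ιU g.F11) + (336:ℂ) • (ιU g.F10 * ιU g.E10) + (-288:ℂ) • (ιU g.F31 * ιU g.E31) + (432:ℂ)
        • (ιU g.E32 * ιU g.F32) := by
  simp only [adURules L, g.br_E21_H10, g.br_E21_F21, g.br_E21_H01, g.br_E21_F11, g.br_E21_F10,
      g.br_E21_F32, g.br_E21_E11, g.br_E21_E10, g.br_E21_F31, lie_self, ιURules L]
  module

lemma step_2_1 : adU g.F31 ((1/3:ℂ) • (ιU g.E21 * ιU g.E21) + (-1:ℂ) • (ιU g.E31 * ιU g.E11) +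
    (1:ℂ) • (ιU g.E32 * ιU g.E10)) =
    (1/3:ℂ) • (ιU g.F10 * ιU g.E21) + (1/3:ℂ) • (ιU g.E21 * ιU g.F10) + (1:ℂ) • (ιU g.H10 * ιU
        g.E11) + (1:ℂ) • (ιU g.H01 * ιU g.E11) + (1:ℂ) • (ιU g.E01 * ιU g.E10) + (-1:ℂ) • (ιU
        g.E32 * ιU g.F21) := by
  simp only [adURules L, g.br_F31_E21, g.br_F31_E31, g.br_F31_E11, g.br_F31_E32, g.br_F31_E10,
      lie_self, ιURules L]
  module

lemma step_2_2 : adU g.F31 ((1/3:ℂ) • (ιU g.F10 * ιU g.E21) + (1/3:ℂ) • (ιU g.E21 * ιU g.F10) +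
    (1:ℂ) • (ιU g.H10 * ιU g.E11) + (1:ℂ) • (ιU g.H01 * ιU g.E11) + (1:ℂ) • (ιU g.E01 * ιU g.E10)
    + (-1:ℂ) • (ιU g.E32 * ιU g.F21)) =
    (2/3:ℂ) • (ιU g.F10 * ιU g.F10) + (2:ℂ) • (ιU g.F31 * ιU g.E11) + (-2:ℂ) • (ιU g.E01 * ιU
        g.F21) := by
  simp only [adURules L, g.br_F31_F10, g.br_F31_E21, g.br_F31_H10, g.br_F31_E11, g.br_F31_H01,
      g.br_F31_E01, g.br_F31_E10, g.br_F31_E32, g.br_F31_F21, lie_self, ιURules L]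
  module

lemma step_2_3 : adU g.E10 ((2/3:ℂ) • (ιU g.F10 * ιU g.F10) + (2:ℂ) • (ιU g.F31 * ιU g.E11) +
    (-2:ℂ) • (ιU g.E01 * ιU g.F21)) =
    (2/3:ℂ) • (ιU g.H10 * ιU g.F10) + (2/3:ℂ) • (ιU g.F10 * ιU g.H10) + (2:ℂ) • (ιU g.F21 * ιU
        g.E11) + (-4:ℂ) • (ιU g.F31 * ιU g.E21) + (-2:ℂ) • (ιU g.E11 * ιU g.F21) + (-4:ℂ) • (ιU
        g.E01 * ιU g.F11) := by
  simp only [adURules L, g.br_E10_F10, g.br_E10_F31, g.br_E10_E11, g.br_E10_E01, g.br_E10_F21,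
      lie_self, ιURules L]
  module

lemma step_2_4 : adU g.E10 ((2/3:ℂ) • (ιU g.H10 * ιU g.F10) + (2/3:ℂ) • (ιU g.F10 * ιU g.H10) +
    (2:ℂ) • (ιU g.F21 * ιU g.E11) + (-4:ℂ) • (ιU g.F31 * ιU g.E21) + (-2:ℂ) • (ιU g.E11 * ιU
    g.F21) + (-4:ℂ) • (ιU g.E01 * ιU g.F11)) =
    (-4/3:ℂ) • (ιU g.E10 * ιU g.F10) + (4/3:ℂ) • (ιU g.H10 * ιU g.H10) + (-4/3:ℂ) • (ιU g.F10 * ιU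
        g.E10) + (4:ℂ) • (ιU g.F11 * ιU g.E11) + (-8:ℂ) • (ιU g.F21 * ιU g.E21) + (12:ℂ) • (ιU
        g.F31 * ιU g.E31) + (4:ℂ) • (ιU g.E21 * ιU g.F21) + (-8:ℂ) • (ιU g.E11 * ιU g.F11) +
        (12:ℂ) • (ιU g.E01 * ιU g.F01) := by
  simp only [adURules L, g.br_E10_H10, g.br_E10_F10, g.br_E10_F21, g.br_E10_E11, g.br_E10_F31,
      g.br_E10_E21, g.br_E10_E01, g.br_E10_F11, lie_self, ιURules L]
  module

lemma step_3_1 : adU g.F32 ((1/3:ℂ) • (ιU g.E21 * ιU g.E21) + (-1:ℂ) • (ιU g.E31 * ιU g.E11) +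
    (1:ℂ) • (ιU g.E32 * ιU g.E10)) =
    (1/3:ℂ) • (ιU g.F11 * ιU g.E21) + (1/3:ℂ) • (ιU g.E21 * ιU g.F11) + (-1:ℂ) • (ιU g.F01 * ιU
        g.E11) + (1:ℂ) • (ιU g.E31 * ιU g.F21) + (-1:ℂ) • (ιU g.H10 * ιU g.E10) + (-2:ℂ) • (ιU
        g.H01 * ιU g.E10) := by
  simp only [adURules L, g.br_F32_E21, g.br_F32_E31, g.br_F32_E11, g.br_F32_E32, g.br_F32_E10,
      lie_self, ιURules L]
  module

lemma step_3_2 : adU g.F32 ((1/3:ℂ) • (ιU g.F11 * ιU g.E21) + (1/3:ℂ) • (ιU g.E21 * ιU g.F11) +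
    (-1:ℂ) • (ιU g.F01 * ιU g.E11) + (1:ℂ) • (ιU g.E31 * ιU g.F21) + (-1:ℂ) • (ιU g.H10 * ιU
    g.E10) + (-2:ℂ) • (ιU g.H01 * ιU g.E10)) =
    (2/3:ℂ) • (ιU g.F11 * ιU g.F11) + (2:ℂ) • (ιU g.F01 * ιU g.F21) + (-2:ℂ) • (ιU g.F32 * ιU
        g.E10) := by
  simp only [adURules L, g.br_F32_F11, g.br_F32_E21, g.br_F32_F01, g.br_F32_E11, g.br_F32_E31,
      g.br_F32_F21, g.br_F32_H10, g.br_F32_E10, g.br_F32_H01, lie_self, ιURules L]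
  module

lemma step_3_3 : adU g.E11 ((2/3:ℂ) • (ιU g.F11 * ιU g.F11) + (2:ℂ) • (ιU g.F01 * ιU g.F21) +
    (-2:ℂ) • (ιU g.F32 * ιU g.E10)) =
    (2/3:ℂ) • (ιU g.H10 * ιU g.F11) + (2:ℂ) • (ιU g.H01 * ιU g.F11) + (2/3:ℂ) • (ιU g.F11 * ιU
        g.H10) + (2:ℂ) • (ιU g.F11 * ιU g.H01) + (2:ℂ) • (ιU g.E10 * ιU g.F21) + (-4:ℂ) • (ιU
        g.F01 * ιU g.F10) + (-2:ℂ) • (ιU g.F21 * ιU g.E10) + (-4:ℂ) • (ιU g.F32 * ιU g.E21) := by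
  simp only [adURules L, g.br_E11_F11, g.br_E11_F01, g.br_E11_F21, g.br_E11_F32, g.br_E11_E10,
      lie_self, ιURules L]
  module

lemma step_3_4 : adU g.E11 ((2/3:ℂ) • (ιU g.H10 * ιU g.F11) + (2:ℂ) • (ιU g.H01 * ιU g.F11) +
    (2/3:ℂ) • (ιU g.F11 * ιU g.H10) + (2:ℂ) • (ιU g.F11 * ιU g.H01) + (2:ℂ) • (ιU g.E10 * ιU
    g.F21) + (-4:ℂ) • (ιU g.F01 * ιU g.F10) + (-2:ℂ) • (ιU g.F21 * ιU g.E10) + (-4:ℂ) • (ιU g.F32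
    * ιU g.E21)) =
    (-4/3:ℂ) • (ιU g.E11 * ιU g.F11) + (4/3:ℂ) • (ιU g.H10 * ιU g.H10) + (4:ℂ) • (ιU g.H10 * ιU
        g.H01) + (4:ℂ) • (ιU g.H01 * ιU g.H10) + (12:ℂ) • (ιU g.H01 * ιU g.H01) + (-4/3:ℂ) • (ιU
        g.F11 * ιU g.E11) + (4:ℂ) • (ιU g.E21 * ιU g.F21) + (-8:ℂ) • (ιU g.E10 * ιU g.F10) +
        (12:ℂ) • (ιU g.F01 * ιU g.E01) + (4:ℂ) • (ιU g.F10 * ιU g.E10) + (-8:ℂ) • (ιU g.F21 * ιU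
        g.E21) + (12:ℂ) • (ιU g.F32 * ιU g.E32) := by
  simp only [adURules L, g.br_E11_H10, g.br_E11_F11, g.br_E11_H01, g.br_E11_E10, g.br_E11_F21,
      g.br_E11_F01, g.br_E11_F10, g.br_E11_F32, g.br_E11_E21, lie_self, ιURules L]
  module

/-- Membership in the left ideal generated by `E₁₀` and `E₀₁`. -/
def MemN (f : UniversalEnvelopingAlgebra ℂ L) : Prop :=
  ∃ A B : UniversalEnvelopingAlgebra ℂ L, f = A * ιU g.E10 + B * ιU g.E01

variable {g} in
lemma MemN.add {f h : UniversalEnvelopingAlgebra ℂ L} (hf : g.MemN f) (hh : g.MemN h) :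
    g.MemN (f + h) := by
  obtain ⟨A, B, rfl⟩ := hf
  obtain ⟨A', B', rfl⟩ := hh
  exact ⟨A + A', B + B', by simp only [add_mul]; abel⟩

variable {g} in
lemma MemN.smul_mul {f : UniversalEnvelopingAlgebra ℂ L} (c : ℂ)
    (h : UniversalEnvelopingAlgebra ℂ L) (hf : g.MemN f) : g.MemN (c • (h * f)) := by
  obtain ⟨A, B, rfl⟩ := hf
  exact ⟨c • (h * A), c • (h * B), by
    simp only [mul_add, smul_add, smul_mul_assoc, mul_assoc]⟩

lemma memN_add {f h : UniversalEnvelopingAlgebra ℂ L} (hf : g.MemN f) (hh : g.MemN h) :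
    g.MemN (f + h) := hf.add hh

lemma memN_smul {f : UniversalEnvelopingAlgebra ℂ L} (c : ℂ)
    (h : UniversalEnvelopingAlgebra ℂ L) (hf : g.MemN f) : g.MemN (c • (h * f)) :=
  hf.smul_mul c h

lemma memN_lie {x y z : L} {c : ℂ} (h : z = c • ⁅x, y⁆) (hx : g.MemN (ιU x))
    (hy : g.MemN (ιU y)) : g.MemN (ιU z) := by
  have e : ιU z = c • (ιU x * ιU y) + (-c) • (ιU y * ιU x) := by
    rw [h, ιU_smul, ιU_lie]; module
  rw [e]
  exact (hy.smul_mul c _).add (hx.smul_mul (-c) _)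

lemma mem_E10 : g.MemN (ιU g.E10) := ⟨1, 0, by simp⟩
lemma mem_E01 : g.MemN (ιU g.E01) := ⟨0, 1, by simp⟩
lemma mem_E11 : g.MemN (ιU g.E11) := g.memN_lie g.defE11 g.mem_E10 g.mem_E01
lemma mem_E21 : g.MemN (ιU g.E21) := g.memN_lie g.defE21 g.mem_E11 g.mem_E10
lemma mem_E31 : g.MemN (ιU g.E31) := g.memN_lie g.defE31 g.mem_E21 g.mem_E10
lemma mem_E32 : g.MemN (ιU g.E32) := g.memN_lie g.defE32 g.mem_E31 g.mem_E01

lemma eqModN_of {f h w : UniversalEnvelopingAlgebra ℂ L} (hw : g.MemN w) (e : f = h + w) :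
    g.EqModN f h := by
  obtain ⟨A, B, rfl⟩ := hw
  exact ⟨A, B, by rw [e]; abel⟩

lemma part_1 : g.EqModN ((adU g.E21)^[2] ((adU g.F21)^[4] g.uU))
    ((16:ℂ) • (ιU g.H21 * (ιU g.H21 + 2))) := by
  apply g.eqModN_of (w := (-32:ℂ) • (ιU g.F21 * ιU g.E21) + (-48:ℂ) • (ιU g.F10 * ιU g.E10) +
      (-48:ℂ) • (ιU g.F11 * ιU g.E11) + (144:ℂ) • (ιU g.F32 * ιU g.E32) + (144:ℂ) • (ιU g.F31 * ιU
      g.E31))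
    (g.memN_add (g.memN_add (g.memN_add (g.memN_add (g.memN_smul (-32) (ιU g.F21) (g.mem_E21))
      (g.memN_smul (-48) (ιU g.F10) (g.mem_E10)))
      (g.memN_smul (-48) (ιU g.F11) (g.mem_E11)))
      (g.memN_smul (144) (ιU g.F32) (g.mem_E32)))
      (g.memN_smul (144) (ιU g.F31) (g.mem_E31)))
  simp only [Function.iterate_succ, Function.iterate_zero, Function.comp_apply, id, uU_eq,
      g.step_1_1, g.step_1_2, g.step_1_3, g.step_1_4, g.step_1_5, g.step_1_6]
  simp only [H11, H21, swap (g.br_E21_F21), swap (g.br_E10_F10), swap (g.br_E31_F31), swap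
      (g.br_E11_F11), swap (g.br_E32_F32), swap (g.br_H10_H01), ιURules L, mul_sub, mul_one,
      mul_twoU]
  module

lemma part_2 : g.EqModN ((adU g.E10)^[2] ((adU g.F31)^[2] g.uU))
    ((4/3:ℂ) • (ιU g.H10 * (ιU g.H10 - 1))) := by
  apply g.eqModN_of (w := (-8/3:ℂ) • (ιU g.F10 * ιU g.E10) + (-4:ℂ) • (ιU g.F11 * ιU g.E11) +
      (-4:ℂ) • (ιU g.F21 * ιU g.E21) + (12:ℂ) • (ιU g.F31 * ιU g.E31) + (12:ℂ) • (ιU g.F01 * ιU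
      g.E01))
    (g.memN_add (g.memN_add (g.memN_add (g.memN_add (g.memN_smul (-8/3) (ιU g.F10) (g.mem_E10))
      (g.memN_smul (-4) (ιU g.F11) (g.mem_E11)))
      (g.memN_smul (-4) (ιU g.F21) (g.mem_E21)))
      (g.memN_smul (12) (ιU g.F31) (g.mem_E31)))
      (g.memN_smul (12) (ιU g.F01) (g.mem_E01)))
  simp only [Function.iterate_succ, Function.iterate_zero, Function.comp_apply, id, uU_eq,
      g.step_2_1, g.step_2_2, g.step_2_3, g.step_2_4]
  simp only [H11, H21, swap (g.br_E10_F10), swap (g.br_E21_F21), swap (g.br_E11_F11), swap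
      (g.br_E01_F01), swap (g.br_H10_H01), ιURules L, mul_sub, mul_one, mul_twoU]
  module

lemma part_3 : g.EqModN ((adU g.E11)^[2] ((adU g.F32)^[2] g.uU))
    ((4:ℂ) • ((3 : ℂ)⁻¹ • (ιU g.H11 * (ιU g.H11 - 1)) + (3 : ℂ) • ιU g.H01)) := by
  apply g.eqModN_of (w := (-8/3:ℂ) • (ιU g.F11 * ιU g.E11) + (-4:ℂ) • (ιU g.F21 * ιU g.E21) +
      (-4:ℂ) • (ιU g.F10 * ιU g.E10) + (12:ℂ) • (ιU g.F01 * ιU g.E01) + (12:ℂ) • (ιU g.F32 * ιU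
      g.E32))
    (g.memN_add (g.memN_add (g.memN_add (g.memN_add (g.memN_smul (-8/3) (ιU g.F11) (g.mem_E11))
      (g.memN_smul (-4) (ιU g.F21) (g.mem_E21)))
      (g.memN_smul (-4) (ιU g.F10) (g.mem_E10)))
      (g.memN_smul (12) (ιU g.F01) (g.mem_E01)))
      (g.memN_smul (12) (ιU g.F32) (g.mem_E32)))
  simp only [Function.iterate_succ, Function.iterate_zero, Function.comp_apply, id, uU_eq,
      g.step_3_1, g.step_3_2, g.step_3_3, g.step_3_4]
  simp only [H11, H21, swap (g.br_E11_F11), swap (g.br_E21_F21), swap (g.br_E10_F10), swap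
      (g.br_H10_H01), ιURules L, mul_sub, mul_one, mul_twoU]
  module

end G2Gens


/-- **Lemma 3.3 (lem-first-case).**  With `u = (1/3)a² − b` (the image under Zhu's map of the
singular vector of `N(−5/3, 0)` of type `G₂⁽¹⁾`), the polynomials `q(H) = H₂₁(H₂₁+2)`,
`p₁(H) = H₁₀(H₁₀−1)` and `p₂(H) = (1/3)H₁₁(H₁₁−1) + 3H₀₁` arise, up to nonzero rational
constants, from `u` modulo `U(𝔤)𝔫₊`. -/
theorem G2Gens.level_minus_five_thirds_polynomials
    {L : Type*} [LieRing L] [LieAlgebra ℂ L] (g : G2Gens L) :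
    ∃ C C₁ C₂ : ℚ, C ≠ 0 ∧ C₁ ≠ 0 ∧ C₂ ≠ 0 ∧
      g.EqModN ((adU g.E21)^[2] ((adU g.F21)^[4] g.uU))
        ((C : ℂ) • (ιU g.H21 * (ιU g.H21 + 2))) ∧
      g.EqModN ((adU g.E10)^[2] ((adU g.F31)^[2] g.uU))
        ((C₁ : ℂ) • (ιU g.H10 * (ιU g.H10 - 1))) ∧
      g.EqModN ((adU g.E11)^[2] ((adU g.F32)^[2] g.uU))
        ((C₂ : ℂ) • ((3 : ℂ)⁻¹ • (ιU g.H11 * (ιU g.H11 - 1)) + (3 : ℂ) • ιU g.H01)) := by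
  refine ⟨16, 4 / 3, 4, by norm_num, by norm_num, by norm_num, ?_, ?_, ?_⟩
  · have h := g.part_1
    push_cast
    exact h
  · have h := g.part_2
    push_cast
    exact h
  · have h := g.part_3
    push_cast
    exact h
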